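/- Let Γ ⊆ PGL₃(ℂ) be a finite subgroup of order m. Then there exists a homogeneous polynomial Φ ∈ ℂ[x,y,z] of degree 4m defining a smooth plane curve whose stabilizer is exactly Γ: an element g ∈ PGL₃(ℂ) satisfies that Φ ∘ ĝ is a nonzero scalar multiple of Φ (for a linear lift ĝ ∈ GL₃(ℂ) of g) if and only if g ∈ Γ. -/

import Mathlib

open MvPolynomial
open scoped MatrixGroups

noncomputable section

/-- Substitution of a linear change of variables into a polynomial in three variables:
`Φ ↦ Φ ∘ M`. -/
def substMat (M : Matrix (Fin 3) (Fin 3) ℂ) :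
    MvPolynomial (Fin 3) ℂ →ₐ[ℂ] MvPolynomial (Fin 3) ℂ :=
  aeval fun i => ∑ j, C (M i j) * X j

/-- The projective linear group `PGL₃(ℂ)`. -/
abbrev PGL3 := GL (Fin 3) ℂ ⧸ Subgroup.center (GL (Fin 3) ℂ)

/-- `Φ` defines a smooth plane curve: the only common zero of the three partial
derivatives in `ℂ³` is the origin. -/
def SmoothCurve (Φ : MvPolynomial (Fin 3) ℂ) : Prop :=
  ∀ q : Fin 3 → ℂ, (∀ i, eval q (pderiv i Φ) = 0) → q = 0

/-- `g ∈ PGL₃(ℂ)` stabilizes the curve `Φ = 0`: for a (hence any) linear lift `glift ∈ GL₃(ℂ)`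
of `g`, the polynomial `Φ ∘ glift` is a nonzero scalar multiple of `Φ`. -/
def ProjStab (Φ : MvPolynomial (Fin 3) ℂ) (g : PGL3) : Prop :=
  ∃ glift : GL (Fin 3) ℂ, QuotientGroup.mk glift = g ∧ ∃ c : ℂ, c ≠ 0 ∧ substMat (↑glift) Φ = c • Φ

section
open scoped TensorProduct

theorem exists_derivation_aux {k S K : Type} [Field k] [CommRing S] [Field K] [Algebra k S]
    [Algebra S K] [Algebra k K] [IsScalarTower k S K] [Algebra.FormallySmooth S K]
    (d : Derivation k S K) : ∃ D : Derivation k K K, ∀ s, D (algebraMap S K s) = d s := by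
  have hinj : Function.Injective (KaehlerDifferential.mapBaseChange k S K) := by
    rw [injective_iff_map_eq_zero]
    intro z hz
    obtain ⟨y, rfl⟩ := (Algebra.H1Cotangent.exact_δ_mapBaseChange k S K z).1 hz
    have : Subsingleton (Algebra.H1Cotangent S K) :=
      Algebra.FormallySmooth.subsingleton_h1Cotangent
    rw [Subsingleton.elim y 0, map_zero]
  obtain ⟨r, hr⟩ := LinearMap.exists_leftInverse_of_injective _ (LinearMap.ker_eq_bot.2 hinj)
  let f : K ⊗[S] Ω[S⁄k] →ₗ[K] K := d.liftKaehlerDifferential.liftBaseChange K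
  refine ⟨(f ∘ₗ r).compDer (KaehlerDifferential.D k K), fun s => ?_⟩
  have h1 : KaehlerDifferential.D k K (algebraMap S K s) =
      KaehlerDifferential.mapBaseChange k S K (1 ⊗ₜ KaehlerDifferential.D k S s) := by
    simp
  have h2 := LinearMap.congr_fun hr (1 ⊗ₜ KaehlerDifferential.D k S s)
  simp only [LinearMap.comp_apply, LinearMap.id_apply] at h2
  simp [h1, -KaehlerDifferential.mapBaseChange_tmul, h2, f]

theorem exists_derivation {k K ι : Type} [Field k] [CharZero k] [Field K] [Algebra k K]
    [DecidableEq ι] (x : ι → K) (hx : AlgebraicIndependent k x) (i : ι) :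
    ∃ D : Derivation k K K, ∀ j, D (x j) = if j = i then 1 else 0 := by
  let S := MvPolynomial ι k
  let L := FractionRing S
  let _ : Algebra S K := (MvPolynomial.aeval x).toAlgebra
  have : IsScalarTower k S K := IsScalarTower.of_algebraMap_eq' (MvPolynomial.aeval x).comp_algebraMap.symm
  have hinj : Function.Injective (algebraMap S K) := hx
  have : FaithfulSMul S K := (faithfulSMul_iff_algebraMap_injective S K).2 hinj
  let _ : Algebra L K := FractionRing.liftAlgebra S K
  have : IsScalarTower S L K := inferInstance
  have : CharZero S := inferInstance
  have : CharZero L := charZero_of_injective_algebraMap (IsFractionRing.injective S L)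
  have h1 : Algebra.FormallySmooth L K := by
    obtain ⟨s, y, hs⟩ := exists_isTranscendenceBasis' L K
    have := hs.isAlgebraic_field
    have : Algebra.IsSeparable (IntermediateField.adjoin L (Set.range y)) K := inferInstance
    exact Algebra.FormallySmooth.of_algebraicIndependent_of_isSeparable hs.1
  have h2 : Algebra.FormallyEtale S L := Algebra.FormallyEtale.of_isLocalization (nonZeroDivisors S)
  have h3 : Algebra.FormallySmooth S K := Algebra.FormallySmooth.comp S L K
  let d : Derivation k S K := MvPolynomial.mkDerivation k (fun j => if j = i then (1:K) else 0)
  obtain ⟨D, hD⟩ := exists_derivation_aux d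
  refine ⟨D, fun j => ?_⟩
  have := hD (MvPolynomial.X j)
  rw [show algebraMap S K (MvPolynomial.X j) = x j from MvPolynomial.aeval_X _ _] at this
  rw [this]; exact MvPolynomial.mkDerivation_X _ _ _

open MvPolynomial in
theorem derivation_chain {σ K : Type} [Fintype σ] [Field K] [Algebra ℂ K]
    (φ : MvPolynomial σ ℂ →ₐ[ℂ] K) (D : Derivation ℂ K K) (P : MvPolynomial σ ℂ) :
    D (φ P) = ∑ v, φ (pderiv v P) * D (φ (X v)) := by
  classical
  induction P using MvPolynomial.induction_on with
  | C a =>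
    have : φ (C a) = algebraMap ℂ K a := φ.commutes a
    simp [this]
  | add p q hp hq => simp [hp, hq, add_mul, Finset.sum_add_distrib]
  | mul_X p n hp =>
    rw [map_mul, Derivation.leibniz, hp]
    simp only [Derivation.leibniz, pderiv_X, map_add, smul_eq_mul, map_mul, add_mul,
      Finset.sum_add_distrib, Finset.mul_sum]
    congr 1
    · rw [Finset.sum_eq_single n]
      · simp
      · intro b _ hb; simp [Pi.single_apply, hb.symm]
      · simp
    · refine Finset.sum_congr rfl fun v _ => by ring

open MvPolynomial in
/-- Bertini. -/
theorem bertini {ι : Type} [Fintype ι] (d : ℕ) (hd : d ≠ 0) (F : ι → MvPolynomial (Fin 3) ℂ)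
    (hF : ∀ i, (F i).IsHomogeneous d)
    (hbase : ∀ q : Fin 3 → ℂ, (∀ i, eval q (F i) = 0) → q = 0) :
    ∃ h : MvPolynomial ι ℂ, h ≠ 0 ∧ ∀ t : ι → ℂ, eval t h ≠ 0 →
      ∀ q : Fin 3 → ℂ, (∀ k, eval q (pderiv k (∑ i, t i • F i)) = 0) → q = 0 := by
  classical
  let il : MvPolynomial (Fin 3) ℂ →ₐ[ℂ] (MvPolynomial (Fin 3 ⊕ ι) ℂ) := rename Sum.inl
  let ir : MvPolynomial ι ℂ →ₐ[ℂ] (MvPolynomial (Fin 3 ⊕ ι) ℂ) := rename Sum.inr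
  let Φ : (MvPolynomial (Fin 3 ⊕ ι) ℂ) := ∑ i, X (Sum.inr i) * il (F i)
  have hpl : ∀ k, pderiv (Sum.inl k) Φ = ∑ i, X (Sum.inr i) * il (pderiv k (F i)) := by
    intro k
    simp only [Φ, map_sum, Derivation.leibniz, il]
    refine Finset.sum_congr rfl fun i _ => ?_
    rw [pderiv_rename Sum.inl_injective, pderiv_X_of_ne (by simp)]
    simp
  have hpr : ∀ j, pderiv (Sum.inr j) Φ = il (F j) := by
    intro j
    simp only [Φ, map_sum, Derivation.leibniz, il]
    have : ∀ i, pderiv (Sum.inr j : Fin 3 ⊕ ι) (rename Sum.inl (F i)) = 0 := by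
      intro i
      refine pderiv_eq_zero_of_notMem_vars ?_
      intro h
      have := vars_rename Sum.inl (F i) h
      simp at this
    simp only [this, smul_zero, zero_add, pderiv_X]
    rw [Finset.sum_eq_single j]
    · simp
    · intro b _ hb; simp [Pi.single_apply, hb]
    · simp
  let J : Ideal (MvPolynomial (Fin 3 ⊕ ι) ℂ) := Ideal.span (Set.range fun k => pderiv (Sum.inl k) Φ)
  have hΦJ : Φ ∈ J := by
    have h1 : (d : ℂ) • Φ = ∑ k : Fin 3, X (Sum.inl k) * pderiv (Sum.inl k) Φ := by
      simp only [hpl, Finset.mul_sum]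
      rw [Finset.sum_comm, Finset.smul_sum]
      refine Finset.sum_congr rfl fun i _ => ?_
      have := congrArg il (hF i).sum_X_mul_pderiv
      simp only [map_sum, map_mul, map_nsmul] at this
      have hX : ∀ k, il (X k) = X (Sum.inl k) := fun k => by simp [il]
      simp only [hX] at this
      rw [Nat.cast_smul_eq_nsmul, ← mul_smul_comm, ← this, Finset.mul_sum]
      refine Finset.sum_congr rfl fun k _ => by ring
    have h2 : (d : ℂ) • Φ ∈ J := by
      rw [h1]
      exact Ideal.sum_mem _ fun k _ => Ideal.mul_mem_left _ _ (Ideal.subset_span ⟨k, rfl⟩)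
    have h3 : Φ = C ((d : ℂ)⁻¹) * ((d : ℂ) • Φ) := by
      rw [← smul_eq_C_mul, smul_smul, inv_mul_cancel₀ (by exact_mod_cast hd), one_smul]
    rw [h3]
    exact Ideal.mul_mem_left _ _ h2
  have hclaim : ∀ p : Ideal (MvPolynomial (Fin 3 ⊕ ι) ℂ), p.IsPrime → J ≤ p → Ideal.comap ir p = ⊥ → ∀ i, il (F i) ∈ p := by
    intro p hp hJ hcomap i
    let K := FractionRing ((MvPolynomial (Fin 3 ⊕ ι) ℂ) ⧸ p)
    let φ : (MvPolynomial (Fin 3 ⊕ ι) ℂ) →ₐ[ℂ] K := (IsScalarTower.toAlgHom ℂ ((MvPolynomial (Fin 3 ⊕ ι) ℂ) ⧸ p) K).comp (Ideal.Quotient.mkₐ ℂ p)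
    have hφ : ∀ r, φ r = 0 ↔ r ∈ p := by
      intro r
      simp only [φ, AlgHom.comp_apply, Ideal.Quotient.mkₐ_eq_mk, IsScalarTower.toAlgHom_apply]
      rw [map_eq_zero_iff _ (IsFractionRing.injective ((MvPolynomial (Fin 3 ⊕ ι) ℂ) ⧸ p) K), Ideal.Quotient.eq_zero_iff_mem]
    have hind : AlgebraicIndependent ℂ (fun j : ι => φ (X (Sum.inr j))) := by
      rw [algebraicIndependent_iff]
      intro P hP
      have : aeval (fun j : ι => φ (X (Sum.inr j))) P = φ (ir P) := by
        simp only [ir]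
        rw [← AlgHom.comp_apply]
        congr 1
        ext j
        simp
      rw [this, hφ] at hP
      have : P ∈ Ideal.comap ir p := hP
      rwa [hcomap] at this
    obtain ⟨D, hD⟩ := exists_derivation _ hind i
    have h1 := derivation_chain φ D Φ
    rw [(hφ Φ).2 (hJ hΦJ), map_zero, Fintype.sum_sum_type] at h1
    rw [Finset.sum_eq_zero (s := (Finset.univ : Finset (Fin 3)))] at h1
    · simp only [hD, hpr] at h1
      rw [← hφ]
      simpa using h1.symm
    · intro k _
      rw [(hφ _).2 (hJ (Ideal.subset_span ⟨k, rfl⟩)), zero_mul]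
  have hfin := Ideal.finite_minimalPrimes_of_isNoetherianRing (MvPolynomial (Fin 3 ⊕ ι) ℂ) J
  have hex : ∀ p : Ideal (MvPolynomial (Fin 3 ⊕ ι) ℂ), ∃ h : MvPolynomial ι ℂ, h ≠ 0 ∧ (Ideal.comap ir p ≠ ⊥ → ir h ∈ p) := by
    intro p
    by_cases hp : Ideal.comap ir p = ⊥
    · exact ⟨1, one_ne_zero, fun h => absurd hp h⟩
    · obtain ⟨h, h1, h2⟩ := Submodule.exists_mem_ne_zero_of_ne_bot hp
      exact ⟨h, h2, fun _ => h1⟩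
  choose hh hh0 hhp using hex
  refine ⟨∏ p ∈ hfin.toFinset, hh p, Finset.prod_ne_zero_iff.2 fun p _ => hh0 p, ?_⟩
  intro t ht q hq
  let ev : (MvPolynomial (Fin 3 ⊕ ι) ℂ) →ₐ[ℂ] ℂ := aeval (Sum.elim q t)
  have hevl : ∀ P, ev (il P) = eval q P := by
    intro P; simp only [ev, il, aeval_rename]; rfl
  have hevr : ∀ P, ev (ir P) = eval t P := by
    intro P; simp only [ev, ir, aeval_rename]; rfl
  have hJ : J ≤ RingHom.ker ev := by
    refine Ideal.span_le.2 ?_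
    rintro _ ⟨k, rfl⟩
    have := hq k
    simp only [SetLike.mem_coe, RingHom.mem_ker, hpl, map_sum, map_mul, hevl]
    simpa [ev, smul_eval] using this
  have hker : (RingHom.ker ev).IsPrime := RingHom.ker_isPrime _
  obtain ⟨p, hp, hpk⟩ := Ideal.exists_minimalPrimes_le hJ
  by_cases hc : Ideal.comap ir p = ⊥
  · refine hbase q fun i => ?_
    rw [← hevl]
    exact hpk (hclaim p hp.1.1 hp.1.2 hc i)
  · exfalso
    apply ht
    rw [map_prod]
    refine Finset.prod_eq_zero (hfin.mem_toFinset.2 hp) ?_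
    rw [← hevr]
    exact hpk (hhp p hc)
end

def F0 : MvPolynomial (Fin 3) ℂ :=
  X 1 ^ 4 - (X 1 + X 2) ^ 4 + C 27 * X 0 ^ 4 + C 64 * (X 0 + X 2) ^ 4

theorem F0_hom : F0.IsHomogeneous 4 := by
  have h : ∀ i : Fin 3, (X i : MvPolynomial (Fin 3) ℂ).IsHomogeneous 1 := isHomogeneous_X ℂ
  have h4 : ∀ {p : MvPolynomial (Fin 3) ℂ}, p.IsHomogeneous 1 → (p ^ 4).IsHomogeneous 4 :=
    fun hp => by simpa using hp.pow 4
  have hC : ∀ (a : ℂ) {p : MvPolynomial (Fin 3) ℂ}, p.IsHomogeneous 4 → (C a * p).IsHomogeneous 4 :=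
    fun a p hp => by simpa using (isHomogeneous_C (Fin 3) a).mul hp
  exact (((h4 (h 1)).sub (h4 ((h 1).add (h 2)))).add (hC 27 (h4 (h 0)))).add (hC 64 (h4 ((h 0).add (h 2))))

theorem F0_eval (x : Fin 3 → ℂ) : eval x F0 =
    x 1 ^ 4 - (x 1 + x 2) ^ 4 + 27 * x 0 ^ 4 + 64 * (x 0 + x 2) ^ 4 := by
  simp [F0]

theorem F0_smooth (q : Fin 3 → ℂ) (h : ∀ i, eval q (pderiv i F0) = 0) : q = 0 := by
  have h0 := h 0
  have h1 := h 1
  have h2 := h 2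
  simp [F0, Derivation.leibniz_pow, pderiv_X, Pi.single_apply] at h0 h1 h2
  set w := q 0
  set u := q 1
  set v := q 2
  have e1 : (u + v) ^ 3 = u ^ 3 := by linear_combination -h1/4
  have e2 : (w + v) ^ 3 = (u / 4) ^ 3 := by linear_combination h2/256 + e1/64
  have e3 : w ^ 3 = (-u / 3) ^ 3 := by linear_combination h0/108 - 64/27*e2
  have n2 : ‖w + v‖ = ‖u‖ / 4 := by
    have := congrArg norm e2
    simp only [norm_pow] at this
    have := (pow_left_inj₀ (norm_nonneg _) (norm_nonneg _) (by norm_num)).1 this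
    simpa using this
  have n3 : ‖w‖ = ‖u‖ / 3 := by
    have := congrArg norm e3
    simp only [norm_pow] at this
    have := (pow_left_inj₀ (norm_nonneg _) (norm_nonneg _) (by norm_num)).1 this
    simpa using this
  have hu : u = 0 := by
    have : v * (3 * u ^ 2 + 3 * u * v + v ^ 2) = 0 := by linear_combination e1
    rw [← norm_eq_zero]
    rcases mul_eq_zero.1 this with hv | hv
    · rw [hv, add_zero] at n2
      linarith
    · have nv : ‖v‖ ≤ 7 / 12 * ‖u‖ := by
        calc ‖v‖ = ‖(w + v) - w‖ := by congr 1; ring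
          _ ≤ _ := norm_sub_le _ _
          _ = _ := by rw [n2, n3]; ring
      have : 3 * ‖u‖ ^ 2 ≤ 3 * ‖u‖ * ‖v‖ + ‖v‖ ^ 2 := by
        calc 3 * ‖u‖ ^ 2 = ‖(3:ℂ) * u ^ 2‖ := by simp
          _ = ‖-(3 * u * v + v ^ 2)‖ := by congr 1; linear_combination hv
          _ ≤ ‖3 * u * v‖ + ‖v ^ 2‖ := by rw [norm_neg]; exact norm_add_le _ _
          _ = _ := by simp
      by_contra hne
      have hpos : 0 < ‖u‖ := lt_of_le_of_ne (norm_nonneg _) (Ne.symm hne)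
      nlinarith [norm_nonneg v]
  have hw : w = 0 := by rw [← norm_eq_zero, n3, hu]; simp
  have hv : v = 0 := by
    have : w + v = 0 := by rw [← norm_eq_zero, n2, hu]; simp
    simpa [hw] using this
  ext i; fin_cases i
  · exact hw
  · exact hu
  · exact hv

theorem F0_irr : Irreducible F0 := by
  rw [← MulEquiv.irreducible_iff (finSuccEquiv ℂ 2)]
  set u : MvPolynomial (Fin 2) ℂ := X 0
  set v : MvPolynomial (Fin 2) ℂ := X 1
  have hform : finSuccEquiv ℂ 2 F0 = Polynomial.C (C 91) * Polynomial.X ^ 4 +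
      Polynomial.C (v * C 256) * Polynomial.X ^ 3 + Polynomial.C (v * (C 384 * v)) * Polynomial.X ^ 2
      + Polynomial.C (v * (C 256 * v ^ 2)) * Polynomial.X
      + Polynomial.C (v * (- (C 4 * u ^ 3 + C 6 * u ^ 2 * v + C 4 * u * v ^ 2) + C 63 * v ^ 3)) := by
    have hX1 : finSuccEquiv ℂ 2 (X 1) = Polynomial.C u := finSuccEquiv_X_succ (j := 0)
    have hX2 : finSuccEquiv ℂ 2 (X 2) = Polynomial.C v := finSuccEquiv_X_succ (j := 1)
    have hC : ∀ a : ℂ, finSuccEquiv ℂ 2 (C a) = Polynomial.C (C a) := fun a => by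
      simp [finSuccEquiv_apply]
    simp only [F0, map_add, map_sub, map_mul, map_pow, hX1, hX2, hC, finSuccEquiv_X_zero,
      map_ofNat, map_neg]
    ring
  set f := finSuccEquiv ℂ 2 F0
  have hc0 : f.coeff 0 = v * (- (C 4 * u ^ 3 + C 6 * u ^ 2 * v + C 4 * u * v ^ 2) + C 63 * v ^ 3) := by
    rw [hform]; simp [Polynomial.coeff_C, -map_mul, -map_add, -map_neg]
  have hc1 : f.coeff 1 = v * (C 256 * v ^ 2) := by
    rw [hform]; simp [Polynomial.coeff_X, Polynomial.coeff_C,-map_mul, Polynomial.coeff_X_pow]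
  have hc2 : f.coeff 2 = v * (C 384 * v) := by
    rw [hform]; simp [Polynomial.coeff_X, Polynomial.coeff_C,-map_mul, Polynomial.coeff_X_pow]
  have hc3 : f.coeff 3 = v * C 256 := by
    rw [hform]; simp [Polynomial.coeff_X, Polynomial.coeff_C,-map_mul, Polynomial.coeff_X_pow]
  have hc4 : f.coeff 4 = C 91 := by
    rw [hform]; simp [Polynomial.coeff_X, Polynomial.coeff_C,-map_mul, Polynomial.coeff_X_pow]
  have h91 : (C 91 : MvPolynomial (Fin 2) ℂ) ≠ 0 := by simp
  have hdeg : f.degree = 4 := by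
    rw [hform]; compute_degree!
  have hnd : f.natDegree = 4 := Polynomial.natDegree_eq_of_degree_eq_some hdeg
  have hlc : f.leadingCoeff = C 91 := by rw [Polynomial.leadingCoeff, hnd, hc4]
  have hP : (Ideal.span {v}).IsPrime :=
    (Ideal.span_singleton_prime (X_ne_zero _)).2 (X_prime)
  have hunit : IsUnit (C 91 : MvPolynomial (Fin 2) ℂ) := IsUnit.map _ (by simp)
  refine Polynomial.irreducible_of_eisenstein_criterion hP ?_ ?_ ?_ ?_ ?_
  · rw [hlc]
    exact fun h => hP.ne_top (Ideal.eq_top_of_isUnit_mem _ h hunit)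
  · intro n hn
    rw [hdeg] at hn
    have hn : n < 4 := by exact_mod_cast hn
    rw [Ideal.mem_span_singleton]
    interval_cases n
    · rw [hc0]; exact dvd_mul_right _ _
    · rw [hc1]; exact dvd_mul_right _ _
    · rw [hc2]; exact dvd_mul_right _ _
    · rw [hc3]; exact dvd_mul_right _ _
  · rw [hdeg]; norm_num
  · rw [hc0, Ideal.span_singleton_pow, Ideal.mem_span_singleton, pow_two]
    intro h
    have := (mul_dvd_mul_iff_left (X_ne_zero _)).1 h
    obtain ⟨r, hr⟩ := this
    have := congrArg (eval ![1, 0]) hr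
    simp [u, v] at this
  · refine Polynomial.isPrimitive_iff_isUnit_of_C_dvd.2 fun r hr => ?_
    rw [Polynomial.C_dvd_iff_dvd_coeff] at hr
    have := hr 4
    rw [hc4] at this
    exact isUnit_of_dvd_unit this hunit
theorem stab_aux (a0 a1 a2 b0 b1 b2 c0 c1 c2 l : ℂ)
  (hl : l ≠ 0)
  (det : a0*(b1*c2-b2*c1) - a1*(b0*c2-b2*c0)+a2*(b0*c1-b1*c0) ≠ 0)
  (ha : a0 * a1 = 0) (ha' : a2 * (a2 - a1 - a0) = 0)
  (hb : b0 * b1 = 0) (hb' : b2 * (b2 - b1 - b0) = 0)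
  (hac : (a0 + c0) * (a1 + c1) = 0) (hac' : (a2 + c2) * ((a2 + c2) - (a1 + c1) - (a0 + c0)) = 0)
  (hbc : (b0 + c0) * (b1 + c1) = 0) (hbc' : (b2 + c2) * ((b2 + c2) - (b1 + c1) - (b0 + c0)) = 0)
  (e1 : b1^3*b2 - (b1+c1)^3*(b2+c2) + 27*(a1^3*a2) + 64*((a1+c1)^3*(a2+c2)) = -l)
  (e2 : b1^4 - (b1+c1)^4 + 27*a1^4 + 64*(a1+c1)^4 = 0)
  (e3 : b0^3*b2 - (b0+c0)^3*(b2+c2) + 27*(a0^3*a2) + 64*((a0+c0)^3*(a2+c2)) = 64*l)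
  (e4 : b0^4 - (b0+c0)^4 + 27*a0^4 + 64*(a0+c0)^4 = 91*l) :
  a1 = 0 ∧ a2 = 0 ∧ b0 = 0 ∧ b2 = 0 ∧ c0 = 0 ∧ c1 = 0 ∧ b1 = a0 ∧ c2 = a0 := by
  rcases mul_eq_zero.1 ha with h1 | h1 <;> rcases mul_eq_zero.1 hb with h3 | h3 <;> subst h1 h3 <;>
  rcases mul_eq_zero.1 ha' with h2 | h2 <;> rcases mul_eq_zero.1 hb' with h4 | h4
  all_goals grind

theorem polar_aux (X Y Z W H I J K P Q R S X' Y' Z' W' H' I' J' K' P' Q' R' S' l : ℂ)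
    (h : ∀ s t : ℂ, (X+s*H+t*P)^4 - (Y+s*I+t*Q)^4 + 27*(Z+s*J+t*R)^4 + 64*(W+s*K+t*S)^4
      = l * ((X'+s*H'+t*P')^4 - (Y'+s*I'+t*Q')^4 + 27*(Z'+s*J'+t*R')^4 + 64*(W'+s*K'+t*S')^4)) :
    H*P*X^2 - I*Q*Y^2 + 27*(J*R*Z^2) + 64*(K*S*W^2) =
      l * (H'*P'*X'^2 - I'*Q'*Y'^2 + 27*(J'*R'*Z'^2) + 64*(K'*S'*W'^2)) := by
  linear_combination (16 * (h 1 1 - h 1 (-1) - h (-1) 1 + h (-1) (-1)) / 4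
      - (h 2 2 - h 2 (-2) - h (-2) 2 + h (-2) (-2)) / 4) / 12 / 12

theorem F0_stab (g : Matrix (Fin 3) (Fin 3) ℂ) (hg : g.det ≠ 0) (l : ℂ) (hl : l ≠ 0)
    (h : ∀ x, eval (g.mulVec x) F0 = l * eval x F0) : ∃ s : ℂ, g = s • (1 : Matrix (Fin 3) (Fin 3) ℂ) := by
  set a0 := g 0 0 with ha0
  set a1 := g 0 1 with ha1
  set a2 := g 0 2 with ha2
  set b0 := g 1 0 with hb0
  set b1 := g 1 1 with hb1
  set b2 := g 1 2 with hb2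
  set c0 := g 2 0 with hc0
  set c1 := g 2 1 with hc1
  set c2 := g 2 2 with hc2
  have H : ∀ x0 x1 x2 : ℂ, (b0*x0+b1*x1+b2*x2)^4
      - ((b0*x0+b1*x1+b2*x2) + (c0*x0+c1*x1+c2*x2))^4 + 27 * (a0*x0+a1*x1+a2*x2)^4
      + 64 * ((a0*x0+a1*x1+a2*x2) + (c0*x0+c1*x1+c2*x2))^4
      = l * (x1 ^ 4 - (x1 + x2) ^ 4 + 27 * x0 ^ 4 + 64 * (x0 + x2) ^ 4) := by
    intro x0 x1 x2
    have := h ![x0, x1, x2]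
    rw [F0_eval, F0_eval] at this
    simpa [Matrix.mulVec, dotProduct, Fin.sum_univ_three] using this
  have key : ∀ h0 h1 h2 k0 k1 k2 x0 x1 x2 : ℂ,
      (b0*h0+b1*h1+b2*h2)*(b0*k0+b1*k1+b2*k2)*(b0*x0+b1*x1+b2*x2)^2
      - ((b0*h0+b1*h1+b2*h2) + (c0*h0+c1*h1+c2*h2)) * ((b0*k0+b1*k1+b2*k2) + (c0*k0+c1*k1+c2*k2))
        * ((b0*x0+b1*x1+b2*x2) + (c0*x0+c1*x1+c2*x2))^2
      + 27 * ((a0*h0+a1*h1+a2*h2)*(a0*k0+a1*k1+a2*k2)*(a0*x0+a1*x1+a2*x2)^2)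
      + 64 * (((a0*h0+a1*h1+a2*h2) + (c0*h0+c1*h1+c2*h2)) * ((a0*k0+a1*k1+a2*k2) + (c0*k0+c1*k1+c2*k2))
        * ((a0*x0+a1*x1+a2*x2) + (c0*x0+c1*x1+c2*x2))^2)
      = l * (h1*k1*x1^2 - (h1+h2)*(k1+k2)*(x1+x2)^2 + 27*(h0*k0*x0^2)
        + 64 * ((h0+h2)*(k0+k2)*(x0+x2)^2)) := by
    intro h0 h1 h2 k0 k1 k2 x0 x1 x2
    apply polar_aux
    intro s t
    have e := H (x0 + s*h0 + t*k0) (x1 + s*h1 + t*k1) (x2 + s*h2 + t*k2)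
    have lin : ∀ a b c : ℂ, a*(x0 + s*h0 + t*k0) + b*(x1 + s*h1 + t*k1) + c*(x2 + s*h2 + t*k2)
      = (a*x0+b*x1+c*x2) + s*(a*h0+b*h1+c*h2) + t*(a*k0+b*k1+c*k2) := by intros; ring
    have add3 : ∀ x h k x' h' k' : ℂ, (x + s * h + t * k) + (x' + s * h' + t * k') =
      (x + x') + s * (h + h') + t * (k + k') := by intros; ring
    simp only [lin, add3] at e
    exact e
  have hdet : a0*(b1*c2-b2*c1) - a1*(b0*c2-b2*c0)+a2*(b0*c1-b1*c0) ≠ 0 := by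
    rw [Matrix.det_fin_three] at hg
    intro h0; apply hg; linear_combination h0
  have surj : ∀ y : Fin 3 → ℂ, ∃ x : Fin 3 → ℂ, g.mulVec x = y := fun y =>
    ⟨g⁻¹.mulVec y, by rw [Matrix.mulVec_mulVec, Matrix.mul_nonsing_inv _ (isUnit_iff_ne_zero.2 hg), Matrix.one_mulVec]⟩
  have indep : ∀ p1 p2 p3 p4 : ℂ, (∀ x0 x1 x2 : ℂ, p1 * (b0*x0+b1*x1+b2*x2)^2
      - p2 * ((b0*x0+b1*x1+b2*x2) + (c0*x0+c1*x1+c2*x2))^2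
      + 27 * (p3 * (a0*x0+a1*x1+a2*x2)^2)
      + 64 * (p4 * ((a0*x0+a1*x1+a2*x2) + (c0*x0+c1*x1+c2*x2))^2) = 0) →
      p1 = 0 ∧ p2 = 0 ∧ p3 = 0 ∧ p4 = 0 := by
    intro p1 p2 p3 p4 hp
    have hp' : ∀ y0 y1 y2 : ℂ, p1 * y1^2 - p2 * (y1+y2)^2 + 27*(p3*y0^2) + 64*(p4*(y0+y2)^2) = 0 := by
      intro y0 y1 y2
      obtain ⟨x, hx⟩ := surj ![y0, y1, y2]
      have e0 := congrFun hx 0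
      have e1 := congrFun hx 1
      have e2 := congrFun hx 2
      simp [Matrix.mulVec, dotProduct, Fin.sum_univ_three] at e0 e1 e2
      have := hp (x 0) (x 1) (x 2)
      rw [← e0, ← e1, ← e2]
      exact this
    have A := hp' 0 1 0
    have B := hp' 0 1 1
    have B' := hp' 0 (-1) 1
    have D := hp' 1 0 1
    have D' := hp' (-1) 0 1
    have E := hp' 1 0 0
    have P2 : p2 = 0 := by linear_combination (B' - B) / 4
    have P4 : p4 = 0 := by linear_combination (D - D') / 256
    refine ⟨by linear_combination A + P2, P2, by linear_combination E / 27 - 64 / 27 * P4, P4⟩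
  have q1 := fun x0 x1 x2 => key 0 1 0 1 0 0 x0 x1 x2
  have q2 := fun x0 x1 x2 => key 0 0 1 (-1) (-1) 1 x0 x1 x2
  obtain ⟨r1, r2, r3, r4⟩ := indep (b1*b0) ((b1+c1)*(b0+c0)) (a1*a0) ((a1+c1)*(a0+c0)) (by
    intro x0 x1 x2; linear_combination q1 x0 x1 x2)
  obtain ⟨s1, s2, s3, s4⟩ := indep (b2*(b2-b1-b0)) ((b2+c2)*((b2+c2)-(b1+c1)-(b0+c0)))
    (a2*(a2-a1-a0)) ((a2+c2)*((a2+c2)-(a1+c1)-(a0+c0))) (by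
    intro x0 x1 x2; linear_combination q2 x0 x1 x2)
  obtain ⟨z1, z2, z3, z4, z5, z6, z7, z8⟩ := stab_aux a0 a1 a2 b0 b1 b2 c0 c1 c2 l hl hdet
    (by linear_combination r3) s3 (by linear_combination r1) s1 (by linear_combination r4) s4
    (by linear_combination r2) s2
    (by linear_combination key 0 1 0 0 0 1 0 1 0) (by linear_combination key 0 1 0 0 1 0 0 1 0)
    (by linear_combination key 1 0 0 0 0 1 1 0 0) (by linear_combination key 1 0 0 1 0 0 1 0 0)
  refine ⟨a0, ?_⟩
  ext i j
  fin_cases i <;> fin_cases j <;> simp <;>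
    first | exact rfl | exact z1 | exact z2 | exact z3 | exact z4 | exact z5 | exact z6 | exact z7 | exact z8

section
attribute [local instance] Matrix.linftyOpNormedRing Matrix.linftyOpNormedAlgebra

def linePoly (P : MvPolynomial (Fin 3) ℂ) (p w : Fin 3 → ℂ) : Polynomial ℂ :=
  aeval (fun i => Polynomial.C (p i) + Polynomial.X * Polynomial.C (w i)) P

theorem linePoly_eval (P : MvPolynomial (Fin 3) ℂ) (p w : Fin 3 → ℂ) (t : ℂ) :
    (linePoly P p w).eval t = eval (p + t • w) P := by
  unfold linePoly
  induction P using MvPolynomial.induction_on with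
  | C a => simp
  | add p q hp hq => simp only [map_add, Polynomial.eval_add, hp, hq]
  | mul_X p n hp =>
    rw [map_mul, map_mul, Polynomial.eval_mul, hp]
    simp only [aeval_X, Polynomial.eval_add, Polynomial.eval_mul, Polynomial.eval_C,
      Polynomial.eval_X, eval_X, Pi.add_apply, Pi.smul_apply, smul_eq_mul]

theorem linePoly_coeff_cont (P : MvPolynomial (Fin 3) ℂ) (w : Fin 3 → ℂ) :
    ∀ j, Continuous fun p => (linePoly P p w).coeff j := by
  unfold linePoly
  induction P using MvPolynomial.induction_on with
  | C a => intro j; simp only [algHom_C]; exact continuous_const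
  | add p q hp hq =>
    intro j
    simp only [map_add, Polynomial.coeff_add]
    exact (hp j).add (hq j)
  | mul_X p n hp =>
    intro j
    simp only [map_mul, aeval_X, mul_add, Polynomial.coeff_add, Polynomial.coeff_mul_C,
      ← mul_assoc]
    refine Continuous.add ((hp j).mul (continuous_apply n)) ?_
    cases j with
    | zero => simp only [Polynomial.coeff_mul_X_zero]; fun_prop
    | succ j => simp only [Polynomial.coeff_mul_X]; exact (hp j).mul continuous_const

theorem cauchy_coeff (f : Polynomial ℂ) (r C : ℝ) (hr : 0 < r)
    (h : ∀ t : ℂ, ‖t‖ ≤ r → ‖f.eval t‖ ≤ C) (j : ℕ) : ‖f.coeff j‖ * r ^ j ≤ C := by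
  have h1 := Complex.norm_iteratedDeriv_le_of_forall_mem_sphere_norm_le (f := fun z => f.eval z)
    (c := 0) (C := C) (R := r) j hr f.differentiable.diffContOnCl
    (fun z hz => h z (by simpa using (mem_sphere_iff_norm.1 hz).le))
  have h2 : iteratedDeriv j (fun z => f.eval z) 0 = (j.factorial : ℂ) * f.coeff j := by
    have h3 : ∀ j, iteratedDeriv j (fun z => f.eval z) =
        fun z => ((Polynomial.derivative^[j]) f).eval z := by
      clear h1
      intro j
      induction j with
      | zero => simp
      | succ j ih =>
        rw [iteratedDeriv_succ, ih, Function.iterate_succ_apply']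
        funext z
        exact Polynomial.deriv _
    rw [h3]
    simp only []
    rw [← Polynomial.coeff_zero_eq_eval_zero, Polynomial.coeff_iterate_derivative]
    simp [Nat.descFactorial_self]
  rw [h2, norm_mul, Complex.norm_natCast, mul_div_assoc] at h1
  have := le_of_mul_le_mul_left h1 (by exact_mod_cast j.factorial_pos)
  rwa [le_div_iff₀ (pow_pos hr j)] at this

def Mult (A : MvPolynomial (Fin 3) ℂ) (m : ℕ) : Prop :=
  ∀ p : Fin 3 → ℂ, p ≠ 0 → ∃ w : Fin 3 → ℂ, ∃ j ≤ m, (linePoly A p w).coeff j ≠ 0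

open Filter Topology in
theorem loc_lower (A B : MvPolynomial (Fin 3) ℂ) (m : ℕ) (hA : Mult A m) :
    ∃ c > 0, ∃ η > 0, ∀ s : ℂ, ‖s‖ < η → ∀ p : Fin 3 → ℂ, ‖p‖ = 1 → ∀ r : ℝ, 0 < r → r ≤ 1 →
      ∃ y : Fin 3 → ℂ, ‖y‖ ≤ r ∧ c * r ^ m ≤ ‖eval (p + y) (A + s • B)‖ := by
  by_contra hcon
  push Not at hcon
  have hpos : ∀ n : ℕ, (0:ℝ) < 1 / ((n:ℝ) + 1) := fun n => Nat.one_div_pos_of_nat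
  choose s hs p hp r hr0 hr1 hlt using fun n : ℕ => hcon (1 / ((n:ℝ)+1)) (hpos n) (1 / ((n:ℝ)+1)) (hpos n)
  have hc : IsCompact (Metric.sphere (0 : Fin 3 → ℂ) 1) := isCompact_sphere _ _
  obtain ⟨p0, hp0, φ, hφ, hlim⟩ := hc.tendsto_subseq (x := p) (fun n => by simpa using hp n)
  have hp0' : p0 ≠ 0 := by
    rintro rfl; simp at hp0
  obtain ⟨w, j, hj, hne⟩ := hA p0 hp0'
  have hW : 0 < 1 + ‖w‖ := by positivity
  have hbound : ∀ n, ‖(linePoly (A + s n • B) (p n) w).coeff j‖ ≤ (1 + ‖w‖) ^ j * (1 / ((n:ℝ)+1)) := by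
    intro n
    have h1 := cauchy_coeff (linePoly (A + s n • B) (p n) w) (r n / (1 + ‖w‖))
      (1 / ((n:ℝ)+1) * r n ^ m) (div_pos (hr0 n) hW) (fun t ht => by
        rw [linePoly_eval]
        refine (hlt n _ ?_).le
        rw [norm_smul]
        calc ‖t‖ * ‖w‖ ≤ (r n / (1 + ‖w‖)) * (1 + ‖w‖) := mul_le_mul ht (by linarith) (norm_nonneg _) (div_pos (hr0 n) hW).le
          _ = r n := by field_simp) j
    have h2 : r n ^ m ≤ r n ^ j := pow_le_pow_of_le_one (hr0 n).le (hr1 n) hj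
    have h3 : 0 < r n ^ j := pow_pos (hr0 n) j
    rw [div_pow, mul_div_assoc', div_le_iff₀ (pow_pos hW j)] at h1
    have h4 : ‖(linePoly (A + s n • B) (p n) w).coeff j‖ * r n ^ j ≤
        ((1 + ‖w‖) ^ j * (1 / ((n:ℝ)+1))) * r n ^ j := by
      refine h1.trans ?_
      have := hpos n
      calc 1 / ((n:ℝ)+1) * r n ^ m * (1 + ‖w‖) ^ j ≤ 1 / ((n:ℝ)+1) * r n ^ j * (1 + ‖w‖) ^ j := by gcongr
        _ = _ := by ring
    exact le_of_mul_le_mul_right h4 h3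
  have hsum : ∀ n, (linePoly (A + s n • B) (p n) w).coeff j =
      (linePoly A (p n) w).coeff j + s n * (linePoly B (p n) w).coeff j := by
    intro n; simp [linePoly]
  have hone : Tendsto (fun n : ℕ => 1 / ((n:ℝ)+1)) atTop (𝓝 0) := tendsto_one_div_add_atTop_nhds_zero_nat
  have hs0 : Tendsto s atTop (𝓝 0) := squeeze_zero_norm (fun n => (hs n).le) hone
  have l1 : Tendsto (fun n => (linePoly (A + s (φ n) • B) (p (φ n)) w).coeff j) atTop
      (𝓝 ((linePoly A p0 w).coeff j + 0 * (linePoly B p0 w).coeff j)) := by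
    simp only [hsum]
    exact (((linePoly_coeff_cont A w j).tendsto p0).comp hlim).add
      ((hs0.comp hφ.tendsto_atTop).mul (((linePoly_coeff_cont B w j).tendsto p0).comp hlim))
  have l2 : Tendsto (fun n => (linePoly (A + s (φ n) • B) (p (φ n)) w).coeff j) atTop (𝓝 0) := by
    refine squeeze_zero_norm (fun n => hbound (φ n)) ?_
    have := (hone.comp hφ.tendsto_atTop).const_mul ((1 + ‖w‖) ^ j)
    simpa using this
  have := tendsto_nhds_unique l1 l2
  rw [zero_mul, add_zero] at this
  exact hne this

theorem hom_smul (P : MvPolynomial (Fin 3) ℂ) (n : ℕ) (h : P.IsHomogeneous n) (a : ℂ)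
    (x : Fin 3 → ℂ) : eval (a • x) P = a ^ n * eval x P := by
  rw [eval_eq', eval_eq', Finset.mul_sum]
  refine Finset.sum_congr rfl fun d hd => ?_
  have h1 := h (mem_support_iff.1 hd)
  have h2 : ∑ i, d i = n := by
    rw [← h1, Finsupp.weight_apply, Finsupp.sum_fintype] <;> simp
  simp only [Pi.smul_apply, smul_eq_mul, mul_pow, Finset.prod_mul_distrib]
  rw [Finset.prod_pow_eq_pow_sum, h2]; ring

abbrev M3 := Matrix (Fin 3) (Fin 3) ℂ

theorem norm_le_entries (g : M3) (a : ℝ) (ha : 0 ≤ a) (h : ∀ i j, ‖g i j‖ ≤ a) : ‖g‖ ≤ 3 * a := by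
  rw [Matrix.linfty_opNorm_def]
  lift a to NNReal using ha
  have : (Finset.univ.sup fun i => ∑ j, ‖g i j‖₊) ≤ 3 * a := by
    refine Finset.sup_le fun i _ => ?_
    have h' : ∀ j, ‖g i j‖₊ ≤ a := fun j => by exact_mod_cast h i j
    calc _ ≤ ∑ j : Fin 3, a := Finset.sum_le_sum fun j _ => h' j
      _ = _ := by simp
  exact_mod_cast this

theorem inv_entries (g : M3) (hg : g.det = 1) (a : ℝ) (ha : 0 ≤ a) (h : ∀ i j, ‖g i j‖ ≤ a) :
    ‖g⁻¹‖ ≤ 6 * a ^ 2 := by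
  have h0 : g⁻¹ = g.adjugate := by simp [Matrix.inv_def, hg]
  have hh : ∀ i j k l i' j' k' l', ‖g i j * g k l - g i' j' * g k' l'‖ ≤ 2 * a ^ 2 := by
    intro i j k l i' j' k' l'
    refine (norm_sub_le _ _).trans ?_
    rw [norm_mul, norm_mul]
    have h1 := mul_le_mul (h i j) (h k l) (norm_nonneg _) ha
    have h2 := mul_le_mul (h i' j') (h k' l') (norm_nonneg _) ha
    nlinarith
  have hh' : ∀ i j k l i' j' k' l', ‖-(g i j * g k l) + g i' j' * g k' l'‖ ≤ 2 * a ^ 2 := by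
    intro i j k l i' j' k' l'
    rw [neg_add_eq_sub]; exact hh _ _ _ _ _ _ _ _
  have := norm_le_entries g⁻¹ (2 * a ^ 2) (by positivity) (by
    rw [h0, Matrix.adjugate_fin_three]
    intro i j
    fin_cases i <;> fin_cases j <;> simp <;> first | exact hh _ _ _ _ _ _ _ _ | exact hh' _ _ _ _ _ _ _ _)
  linarith

theorem entry_le (g : M3) (i j) : ‖g i j‖ ≤ ‖g‖ := by
  have := Matrix.linfty_opNorm_mulVec g (Pi.single j 1)
  rw [Matrix.mulVec_single_one] at this
  refine (norm_le_pi_norm (g.col j) i).trans (this.trans ?_)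
  simp [Pi.norm_single]

theorem inv_norm_le (g : M3) (hg : g.det = 1) : ‖g⁻¹‖ ≤ 6 * ‖g‖ ^ 2 :=
  inv_entries g hg _ (norm_nonneg _) (entry_le g)

theorem LB (A B : MvPolynomial (Fin 3) ℂ) (m : ℕ) (hA : Mult A m)
    (hhA : A.IsHomogeneous (4 * m)) (hhB : B.IsHomogeneous (4 * m)) :
    ∃ c > 0, ∃ η > 0, ∀ s : ℂ, ‖s‖ < η → ∀ g : M3, g.det = 1 → ∀ K : ℝ,
      (∀ x, ‖x‖ ≤ 1 → ‖eval (g.mulVec x) (A + s • B)‖ ≤ K) → c * ‖g‖ ^ m ≤ K := by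
  obtain ⟨c, hc, η, hη, H⟩ := loc_lower A B m hA
  refine ⟨c / 288 ^ m, by positivity, η, hη, fun s hs g hg K hK => ?_⟩
  have hhom : (A + s • B).IsHomogeneous (4 * m) := by
    refine hhA.add ?_
    rw [smul_eq_C_mul]
    simpa using (isHomogeneous_C _ s).mul hhB
  obtain ⟨⟨i0, j0⟩, hmax⟩ := Finite.exists_max (fun p : Fin 3 × Fin 3 => ‖g p.1 p.2‖)
  set σ := ‖g i0 j0‖ with hσ
  have hent : ∀ i j, ‖g i j‖ ≤ σ := fun i j => hmax (i, j)
  have hσ0 : 0 ≤ σ := norm_nonneg _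
  have h3 : ‖g‖ ≤ 3 * σ := norm_le_entries g σ hσ0 hent
  have hi : ‖g⁻¹‖ ≤ 6 * σ ^ 2 := inv_entries g hg σ hσ0 hent
  have hu : IsUnit g.det := by simp [hg]
  have hgi : g * g⁻¹ = 1 := Matrix.mul_nonsing_inv g hu
  have hig : g⁻¹ * g = 1 := Matrix.nonsing_inv_mul g hu
  set e : Fin 3 → ℂ := Pi.single j0 1 with he
  have hen : ‖e‖ = 1 := by simp [he, Pi.norm_single]
  have hcol : ‖g.mulVec e‖ = σ := by
    rw [he, Matrix.mulVec_single_one]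
    apply le_antisymm
    · exact (pi_norm_le_iff_of_nonneg hσ0).2 fun i => hent i j0
    · exact norm_le_pi_norm (g.col j0) i0
  have h1 : 1 ≤ ‖g⁻¹‖ * σ := by
    have := Matrix.linfty_opNorm_mulVec g⁻¹ (g.mulVec e)
    rwa [Matrix.mulVec_mulVec, hig, Matrix.one_mulVec, hen, hcol] at this
  have hσp : 0 < σ := by
    rcases hσ0.eq_or_lt with h | h
    · rw [← h] at h1; simp at h1; linarith
    · exact h
  have hip : 0 < ‖g⁻¹‖ := by
    rcases (norm_nonneg g⁻¹).eq_or_lt with h | h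
    · rw [← h] at h1; simp at h1; linarith
    · exact h
  have hσc : (σ : ℂ) ≠ 0 := by exact_mod_cast hσp.ne'
  obtain ⟨y, hy, hyl⟩ := H s hs ((σ : ℂ)⁻¹ • g.mulVec e)
    (by rw [norm_smul, hcol]; simp [abs_of_pos hσp, hσp.ne']) (1 / (‖g⁻¹‖ * σ)) (by positivity)
    (by rw [div_le_one (by positivity)]; exact h1)
  set z : Fin 3 → ℂ := e + (σ : ℂ) • g⁻¹.mulVec y with hz
  have hzn : ‖z‖ ≤ 2 := by
    have h4 := Matrix.linfty_opNorm_mulVec g⁻¹ y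
    have h5 : ‖(σ : ℂ) • g⁻¹.mulVec y‖ ≤ 1 := by
      rw [norm_smul, Complex.norm_real, Real.norm_of_nonneg hσ0]
      calc _ ≤ σ * (‖g⁻¹‖ * (1 / (‖g⁻¹‖ * σ))) := by gcongr; exact h4.trans (by gcongr)
        _ = 1 := by field_simp
    calc ‖z‖ ≤ _ := norm_add_le _ _
      _ ≤ 2 := by rw [hen]; linarith
  have hgz : g.mulVec ((1/2 : ℂ) • z) = ((σ : ℂ) / 2) • ((σ : ℂ)⁻¹ • g.mulVec e + y) := by
    rw [hz, Matrix.mulVec_smul, Matrix.mulVec_add, Matrix.mulVec_smul, Matrix.mulVec_mulVec, hgi,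
      Matrix.one_mulVec, smul_add, smul_add, smul_smul, smul_smul]
    congr 2 <;> field_simp
  have hfin := hK ((1/2 : ℂ) • z) (by rw [norm_smul]; norm_num; linarith)
  rw [hgz, hom_smul _ _ hhom, norm_mul, norm_pow, norm_div, Complex.norm_real,
    Real.norm_of_nonneg hσ0, Complex.norm_ofNat] at hfin
  refine le_trans ?_ hfin
  have hr : 1 / (6 * σ ^ 3) ≤ 1 / (‖g⁻¹‖ * σ) := by
    apply one_div_le_one_div_of_le (by positivity)
    nlinarith
  calc c / 288 ^ m * ‖g‖ ^ m ≤ c / 288 ^ m * (3 * σ) ^ m := by gcongr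
    _ = (σ / 2) ^ (4 * m) * (c * (1 / (6 * σ ^ 3)) ^ m) := by
      have e1 : (σ / 2) ^ 4 * (1 / (6 * σ ^ 3)) = 3 * σ / 288 := by field_simp; norm_num
      calc _ = c * (3 * σ / 288) ^ m := by rw [div_pow]; ring
        _ = _ := by rw [← e1, mul_pow, pow_mul]; ring
    _ ≤ (σ / 2) ^ (4 * m) * (c * (1 / (‖g⁻¹‖ * σ)) ^ m) := by gcongr
    _ ≤ _ := by gcongr

def Stb (P : MvPolynomial (Fin 3) ℂ) (g : M3) : Prop :=
  g.det = 1 ∧ ∃ c : ℂ, c ≠ 0 ∧ ∀ x, eval (g.mulVec x) P = c * eval x P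

theorem Stb.mul {P : MvPolynomial (Fin 3) ℂ} {g h : M3} (hg : Stb P g) (hh : Stb P h) :
    Stb P (g * h) := by
  obtain ⟨h1, c, hc, h2⟩ := hg
  obtain ⟨h3, d, hd, h4⟩ := hh
  refine ⟨by rw [Matrix.det_mul, h1, h3, one_mul], c * d, mul_ne_zero hc hd, fun x => ?_⟩
  rw [← Matrix.mulVec_mulVec, h2, h4, mul_assoc]

theorem Stb.inv {P : MvPolynomial (Fin 3) ℂ} {g : M3} (hg : Stb P g) : Stb P g⁻¹ := by
  obtain ⟨h1, c, hc, h2⟩ := hg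
  have hu : IsUnit g.det := by simp [h1]
  refine ⟨by rw [Matrix.det_nonsing_inv, h1]; simp, c⁻¹, inv_ne_zero hc, fun x => ?_⟩
  have := h2 (g⁻¹.mulVec x)
  rw [Matrix.mulVec_mulVec, Matrix.mul_nonsing_inv g hu, Matrix.one_mulVec] at this
  rw [this, inv_mul_cancel_left₀ hc]

theorem poly_bdd (P : MvPolynomial (Fin 3) ℂ) : ∃ K : ℝ, 0 ≤ K ∧ ∀ x : Fin 3 → ℂ, ‖x‖ ≤ 1 → ‖eval x P‖ ≤ K := by
  obtain ⟨K, hK⟩ := (isCompact_closedBall (0 : Fin 3 → ℂ) 1).exists_bound_of_continuousOn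
    (f := fun x => eval x P) (MvPolynomial.continuous_eval P).continuousOn
  refine ⟨max K 0, le_max_right _ _, fun x hx => (hK x (by simpa using hx)).trans (le_max_left _ _)⟩

theorem stab_bdd (A B : MvPolynomial (Fin 3) ℂ) (m : ℕ) (hm : 1 ≤ m) (hA : Mult A m)
    (hhA : A.IsHomogeneous (4 * m)) (hhB : B.IsHomogeneous (4 * m)) :
    ∃ R : ℝ, ∃ η > 0, ∀ s : ℂ, ‖s‖ < η → ∀ g : M3, Stb (A + s • B) g → ‖g‖ ≤ R := by
  obtain ⟨c, hc, η, hη, H⟩ := LB A B m hA hhA hhB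
  obtain ⟨KA, hKA0, hKA⟩ := poly_bdd A
  obtain ⟨KB, hKB0, hKB⟩ := poly_bdd B
  set D := ((KA + KB) / c) ^ 2 with hD
  have hD0 : 0 ≤ D := by positivity
  refine ⟨1 + 6 * (1 + D) ^ 2, min η 1, lt_min hη one_pos, fun s hs g hg => ?_⟩
  have hK : ∀ x : Fin 3 → ℂ, ‖x‖ ≤ 1 → ‖eval x (A + s • B)‖ ≤ KA + KB := by
    intro x hx
    rw [map_add, smul_eval]
    refine (norm_add_le _ _).trans ?_
    rw [norm_mul]
    have h1 := hKA x hx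
    have h2 := hKB x hx
    have h3 : ‖s‖ ≤ 1 := (hs.trans_le (min_le_right _ _)).le
    have := mul_le_mul h3 h2 (norm_nonneg _) zero_le_one
    linarith
  have hs' := hs.trans_le (min_le_left _ _)
  have hu : IsUnit g.det := by simp [hg.1]
  obtain ⟨h1, l, hl, h2⟩ := id hg
  have hi := hg.inv
  have b1 := H s hs' g h1 (‖l‖ * (KA + KB)) (fun x hx => by
    rw [h2, norm_mul]; have := hK x hx; gcongr)
  have b2 := H s hs' g⁻¹ hi.1 (‖l‖⁻¹ * (KA + KB)) (fun x hx => by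
    have := h2 (g⁻¹.mulVec x)
    rw [Matrix.mulVec_mulVec, Matrix.mul_nonsing_inv g hu, Matrix.one_mulVec] at this
    have h3 : eval (g⁻¹.mulVec x) (A + s • B) = l⁻¹ * eval x (A + s • B) := by
      rw [this, inv_mul_cancel_left₀ hl]
    rw [h3, norm_mul, norm_inv]; have := hK x hx; gcongr)
  have hlp : 0 < ‖l‖ := norm_pos_iff.2 hl
  have b3 : (‖g‖ * ‖g⁻¹‖) ^ m ≤ D := by
    have := mul_le_mul b1 b2 (by positivity) (by positivity)
    rw [hD, div_pow, le_div_iff₀ (by positivity)]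
    calc _ = c * ‖g‖ ^ m * (c * ‖g⁻¹‖ ^ m) := by ring
      _ ≤ _ := this
      _ = _ := by field_simp
  have b4 : ‖g‖ * ‖g⁻¹‖ ≤ 1 + D := by
    rcases le_total (‖g‖ * ‖g⁻¹‖) 1 with h | h
    · linarith
    · have := le_self_pow₀ h (by omega : m ≠ 0)
      linarith
  have b5 := inv_norm_le g⁻¹ hi.1
  rw [Matrix.nonsing_inv_nonsing_inv g hu] at b5
  by_contra hcon
  push Not at hcon
  have g1 : 1 ≤ ‖g‖ := by nlinarith [sq_nonneg (1 + D)]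
  have b6 : ‖g⁻¹‖ ≤ 1 + D := by
    have := norm_nonneg g⁻¹
    nlinarith
  have b7 : ‖g⁻¹‖ ^ 2 ≤ (1 + D) ^ 2 := by gcongr
  linarith

open Filter Topology in
theorem stab_near (A B : MvPolynomial (Fin 3) ℂ) (m : ℕ) (hm : 1 ≤ m) (hA : Mult A m)
    (hhA : A.IsHomogeneous (4 * m)) (hhB : B.IsHomogeneous (4 * m)) (ε : ℝ) (hε : 0 < ε) :
    ∃ η > 0, ∀ s : ℂ, ‖s‖ < η → ∀ g : M3, Stb (A + s • B) g → ∃ γ, Stb A γ ∧ ‖g - γ‖ < ε := by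
  obtain ⟨R, η, hη, hR⟩ := stab_bdd A B m hm hA hhA hhB
  by_contra hcon
  push Not at hcon
  have hpos : ∀ n : ℕ, (0:ℝ) < min η (1 / ((n:ℝ) + 1)) := fun n => lt_min hη Nat.one_div_pos_of_nat
  choose s hs g hg hfar using fun n : ℕ => hcon _ (hpos n)
  have hR' : ∀ n, ‖g n‖ ≤ R := fun n => hR (s n) ((hs n).trans_le (min_le_left _ _)) _ (hg n)
  have : ProperSpace M3 := FiniteDimensional.proper ℂ M3
  obtain ⟨γ, -, φ, hφ, hlim⟩ := (isCompact_closedBall (0 : M3) R).tendsto_subseq (x := g)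
    (fun n => by simpa using hR' n)
  have hs0 : Tendsto (s ∘ φ) atTop (𝓝 0) := by
    have : Tendsto s atTop (𝓝 0) := squeeze_zero_norm
      (fun n => ((hs n).trans_le (min_le_right _ _)).le) tendsto_one_div_add_atTop_nhds_zero_nat
    exact this.comp hφ.tendsto_atTop
  have hdet : γ.det = 1 := by
    have h1 : Tendsto (fun n => (g (φ n)).det) atTop (𝓝 γ.det) :=
      ((continuous_id.matrix_det : Continuous fun M : M3 => M.det).tendsto γ).comp hlim
    have h2 : (fun n => (g (φ n)).det) = fun _ => (1:ℂ) := funext fun n => (hg (φ n)).1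
    rw [h2] at h1
    exact (tendsto_nhds_unique h1 tendsto_const_nhds)
  have hev : ∀ (P : MvPolynomial (Fin 3) ℂ) x,
      Tendsto (fun n => eval ((g (φ n)).mulVec x) P) atTop (𝓝 (eval (γ.mulVec x) P)) := by
    intro P x
    have : Continuous fun M : M3 => eval (M.mulVec x) P :=
      (MvPolynomial.continuous_eval P).comp (Continuous.matrix_mulVec continuous_id continuous_const)
    exact (this.tendsto γ).comp hlim
  have hl : ∀ x, Tendsto (fun n => eval ((g (φ n)).mulVec x) (A + s (φ n) • B)) atTop
      (𝓝 (eval (γ.mulVec x) A)) := by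
    intro x
    have := (hev A x).add (hs0.mul (hev B x))
    simpa [smul_eval] using this
  have hr : ∀ x, Tendsto (fun n => eval x (A + s (φ n) • B)) atTop (𝓝 (eval x A)) := by
    intro x
    have := (tendsto_const_nhds (x := eval x A) (f := atTop)).add (hs0.mul_const (eval x B))
    simpa [smul_eval] using this
  have hA0 : A ≠ 0 := by
    rintro rfl
    obtain ⟨w, j, -, hj⟩ := hA 1 one_ne_zero
    simp [linePoly] at hj
  obtain ⟨x0, hx0⟩ : ∃ x, eval x A ≠ 0 := by
    by_contra h
    push Not at h
    exact hA0 (MvPolynomial.funext fun x => by rw [h x, map_zero])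
  have key : ∀ x, eval (γ.mulVec x) A * eval x0 A = eval (γ.mulVec x0) A * eval x A := by
    intro x
    refine tendsto_nhds_unique ((hl x).mul (hr x0)) (((hl x0).mul (hr x)).congr fun n => ?_)
    obtain ⟨-, c, -, h⟩ := hg (φ n)
    rw [h, h]; ring
  have hu : IsUnit γ.det := by simp [hdet]
  have hS : Stb A γ := by
    refine ⟨hdet, eval (γ.mulVec x0) A / eval x0 A, div_ne_zero ?_ hx0, fun x => ?_⟩
    · intro h0
      have := key (γ⁻¹.mulVec x0)
      rw [Matrix.mulVec_mulVec, Matrix.mul_nonsing_inv γ hu, Matrix.one_mulVec, h0, zero_mul] at this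
      exact hx0 (by simpa using this)
    · rw [div_mul_eq_mul_div, eq_div_iff hx0, key]
  have hd : Tendsto (fun n => ‖g (φ n) - γ‖) atTop (𝓝 0) := by
    have := tendsto_iff_norm_sub_tendsto_zero.1 hlim
    exact this
  have := le_of_tendsto_of_tendsto tendsto_const_nhds hd
    (Filter.Eventually.of_forall fun n => hfar (φ n) γ hS)
  linarith

theorem stab_perturb (A B : MvPolynomial (Fin 3) ℂ) (m : ℕ) (hm : 1 ≤ m) (hA : Mult A m)
    (hhA : A.IsHomogeneous (4 * m)) (hhB : B.IsHomogeneous (4 * m))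
    (hfin : {g | Stb A g}.Finite) (hinv : ∀ s : ℂ, ∀ g, Stb A g → Stb (A + s • B) g) :
    ∃ η > 0, ∀ s : ℂ, ‖s‖ < η → ∀ g : M3, Stb (A + s • B) g → Stb A g := by
  obtain ⟨δ, hδ, hδ2, hsep⟩ : ∃ δ : ℝ, 0 < δ ∧ δ ≤ 1 / 2 ∧ ∀ γ, Stb A γ → ‖γ - 1‖ < 4 * δ → γ = 1 := by
    have hf := hfin.subset (Set.sdiff_subset (t := {1}))
    have : ({g | Stb A g} \ {1})ᶜ ∈ nhds (1 : M3) := hf.isClosed.isOpen_compl.mem_nhds (by simp)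
    obtain ⟨d, hd, hb⟩ := Metric.mem_nhds_iff.1 this
    refine ⟨min (d / 4) (1 / 2), by positivity, min_le_right _ _, fun γ hγ hn => ?_⟩
    by_contra hne
    refine hb (a := γ) ?_ ⟨hγ, hne⟩
    rw [Metric.mem_ball, dist_eq_norm]
    have := min_le_left (d / 4) (1 / 2 : ℝ)
    linarith
  obtain ⟨Mb, hMb1, hMb⟩ : ∃ Mb : ℝ, 1 ≤ Mb ∧ ∀ γ, Stb A γ → ‖γ‖ ≤ Mb := by
    obtain ⟨C, hC⟩ := hfin.isBounded.exists_norm_le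
    exact ⟨max C 1, le_max_right _ _, fun γ hγ => (hC γ hγ).trans (le_max_left _ _)⟩
  have hMp : 0 < Mb := by linarith
  obtain ⟨η, hη, H⟩ := stab_near A B m hm hA hhA hhB (δ / Mb) (by positivity)
  refine ⟨η, hη, fun s hs h hh => ?_⟩
  have step : ∀ g, Stb (A + s • B) g → ∃ γ, Stb A γ ∧ ‖g * γ⁻¹ - 1‖ < δ ∧ ‖g - γ‖ < δ := by
    intro g hg
    obtain ⟨γ, hγ, hn⟩ := H s hs g hg
    have hu : IsUnit γ.det := by simp [hγ.1]
    refine ⟨γ, hγ, ?_, hn.trans_le (div_le_self hδ.le hMb1)⟩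
    have : g * γ⁻¹ - 1 = (g - γ) * γ⁻¹ := by rw [sub_mul, Matrix.mul_nonsing_inv γ hu]
    rw [this]
    have h2 := hMb _ hγ.inv
    calc _ ≤ ‖g - γ‖ * ‖γ⁻¹‖ := norm_mul_le _ _
      _ ≤ ‖g - γ‖ * Mb := by gcongr
      _ < δ / Mb * Mb := by gcongr
      _ = δ := by field_simp
  obtain ⟨γ, hγ, hk, -⟩ := step h hh
  have hkS : Stb (A + s • B) (h * γ⁻¹) := hh.mul (hinv s _ hγ.inv)
  have iter : ∀ n : ℕ, ∀ k, Stb (A + s • B) k → ‖k - 1‖ < δ → (3/2 : ℝ) ^ n * ‖k - 1‖ < δ := by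
    intro n
    induction n with
    | zero => intro k _ hk; simpa using hk
    | succ n ih =>
      intro k hkS hk
      have e1 : k * k - 1 = (2 : ℂ) • (k - 1) + (k - 1) * (k - 1) := by
        rw [two_smul]; noncomm_ring
      have lo : (3 / 2) * ‖k - 1‖ ≤ ‖k * k - 1‖ := by
        have h1 : ‖(2 : ℂ) • (k - 1)‖ ≤ ‖k * k - 1‖ + ‖(k - 1) * (k - 1)‖ := by
          have : (2 : ℂ) • (k - 1) = (k * k - 1) - (k - 1) * (k - 1) := by rw [e1]; abel
          rw [this]; exact norm_sub_le _ _
        rw [norm_smul, Complex.norm_ofNat] at h1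
        have h2 := norm_mul_le (k - 1) (k - 1)
        have := norm_nonneg (k - 1)
        nlinarith
      have hi : ‖k * k - 1‖ < 3 * δ := by
        rw [e1]
        refine (norm_add_le _ _).trans_lt ?_
        rw [norm_smul, Complex.norm_ofNat]
        have h2 := norm_mul_le (k - 1) (k - 1)
        have := norm_nonneg (k - 1)
        nlinarith
      have hkk := hkS.mul hkS
      obtain ⟨γ', hγ', ha, hb⟩ := step _ hkk
      have : γ' = 1 := by
        refine hsep γ' hγ' ?_
        have : γ' - 1 = (k * k - 1) - (k * k - γ') := by abel
        rw [this]
        refine (norm_sub_le _ _).trans_lt ?_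
        linarith
      rw [this] at hb
      have := ih _ hkk hb
      rw [pow_succ]
      have hp : 0 < (3/2 : ℝ) ^ n := by positivity
      calc _ = (3/2 : ℝ) ^ n * (3 / 2 * ‖k - 1‖) := by ring
        _ ≤ (3/2 : ℝ) ^ n * ‖k * k - 1‖ := by gcongr
        _ < δ := this
  have hone : h * γ⁻¹ = 1 := by
    by_contra hne
    have hp : 0 < ‖h * γ⁻¹ - 1‖ := norm_pos_iff.2 (sub_ne_zero.2 hne)
    obtain ⟨n, hn⟩ := pow_unbounded_of_one_lt (δ / ‖h * γ⁻¹ - 1‖) (by norm_num : (1:ℝ) < 3 / 2)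
    have := iter n _ hkS hk
    rw [div_lt_iff₀ hp] at hn
    linarith
  have hu : IsUnit γ.det := by simp [hγ.1]
  have : h = γ := by
    have := congrArg (· * γ) hone
    simpa [mul_assoc, Matrix.nonsing_inv_mul γ hu] using this
  rw [this]; exact hγ
end

theorem substMat_eval (M : M3) (P : MvPolynomial (Fin 3) ℂ) (x : Fin 3 → ℂ) :
    eval x (substMat M P) = eval (M.mulVec x) P := by
  unfold substMat
  induction P using MvPolynomial.induction_on with
  | C a => simp
  | add p q hp hq => simp only [map_add, hp, hq]
  | mul_X p n hp =>
    rw [map_mul, map_mul, map_mul, hp]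
    simp [Matrix.mulVec, dotProduct]

theorem substMat_substMat (M N : M3) (P : MvPolynomial (Fin 3) ℂ) :
    substMat N (substMat M P) = substMat (M * N) P :=
  MvPolynomial.funext fun x => by simp only [substMat_eval, Matrix.mulVec_mulVec]

theorem substMat_one (P : MvPolynomial (Fin 3) ℂ) : substMat 1 P = P :=
  MvPolynomial.funext fun x => by simp only [substMat_eval, Matrix.one_mulVec]

theorem substMat_hom (M : M3) (P : MvPolynomial (Fin 3) ℂ) (n : ℕ) (h : P.IsHomogeneous n) :
    (substMat M P).IsHomogeneous n := by
  have := h.aeval (n := 1) (fun i => ∑ j, C (M i j) * X j) (fun i => by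
    refine IsHomogeneous.sum _ _ _ fun j _ => ?_
    simpa using (isHomogeneous_C (Fin 3) (M i j)).mul (isHomogeneous_X ℂ j))
  rwa [one_mul] at this

theorem substMat_smul (l : ℂ) (M : M3) (P : MvPolynomial (Fin 3) ℂ) (n : ℕ)
    (h : P.IsHomogeneous n) : substMat (l • M) P = l ^ n • substMat M P :=
  MvPolynomial.funext fun x => by
    rw [smul_eval, substMat_eval, substMat_eval, Matrix.smul_mulVec, hom_smul P n h]

theorem substMat_irr (M : M3) (hM : M.det ≠ 0) : Irreducible (substMat M F0) := by
  have hu : IsUnit M.det := isUnit_iff_ne_zero.2 hM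
  let e : MvPolynomial (Fin 3) ℂ ≃ₐ[ℂ] MvPolynomial (Fin 3) ℂ :=
    AlgEquiv.ofAlgHom (substMat M) (substMat M⁻¹)
      (AlgHom.ext fun P => by simp [substMat_substMat, Matrix.nonsing_inv_mul M hu, substMat_one])
      (AlgHom.ext fun P => by simp [substMat_substMat, Matrix.mul_nonsing_inv M hu, substMat_one])
  exact (MulEquiv.irreducible_iff e).2 F0_irr

theorem pgl_eq {a b : GL (Fin 3) ℂ} (h : (QuotientGroup.mk a : PGL3) = QuotientGroup.mk b) :
    ∃ l : ℂ, l ≠ 0 ∧ (b : M3) = l • (a : M3) := by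
  rw [QuotientGroup.eq, Matrix.GeneralLinearGroup.mem_center_iff_val_mem_range_scalar] at h
  obtain ⟨l, hl⟩ := h
  have hb : (b : M3) = l • (a : M3) := by
    have : (b : M3) = (a : M3) * ((a⁻¹ * b : GL (Fin 3) ℂ) : M3) := by
      rw [← Units.val_mul, mul_inv_cancel_left]
    rw [this, ← hl, Matrix.scalar_apply, ← Matrix.smul_one_eq_diagonal, mul_smul_comm, mul_one]
  refine ⟨l, ?_, hb⟩
  rintro rfl
  rw [zero_smul] at hb
  have := b.isUnit
  rw [hb] at this
  exact not_isUnit_zero this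

theorem pgl_eq' {a b : GL (Fin 3) ℂ} (l : ℂ) (h : (b : M3) = l • (a : M3)) :
    (QuotientGroup.mk a : PGL3) = QuotientGroup.mk b := by
  rw [QuotientGroup.eq, Matrix.GeneralLinearGroup.mem_center_iff_val_mem_range_scalar]
  refine ⟨l, ?_⟩
  rw [Units.val_mul, h, mul_smul_comm, ← Units.val_mul, inv_mul_cancel, Matrix.scalar_apply,
    ← Matrix.smul_one_eq_diagonal]
  rfl

def rep (g : PGL3) : GL (Fin 3) ℂ := Quotient.out g

theorem rep_mk (g : PGL3) : (QuotientGroup.mk (rep g) : PGL3) = g := Quotient.out_eq g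

def NN (Γ : Subgroup PGL3) [Fintype Γ] (Q : MvPolynomial (Fin 3) ℂ) : MvPolynomial (Fin 3) ℂ :=
  ∏ γ : Γ, substMat (rep γ.1 : M3) Q

theorem NN_hom (Γ : Subgroup PGL3) [Fintype Γ] (Q : MvPolynomial (Fin 3) ℂ)
    (h : Q.IsHomogeneous 4) : (NN Γ Q).IsHomogeneous (4 * Fintype.card Γ) := by
  have := IsHomogeneous.prod (Finset.univ : Finset Γ) (fun γ => substMat (rep γ.1 : M3) Q)
    (fun _ => 4) (fun γ _ => substMat_hom _ _ _ h)
  unfold NN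
  simpa [mul_comm] using this

theorem NN_semi_aux (Γ : Subgroup PGL3) (h : GL (Fin 3) ℂ) (h' : Γ)
    (hh : h'.1 = QuotientGroup.mk h) (γ : Γ) :
    ∃ l : ℂ, l ≠ 0 ∧ (rep γ.1 : M3) * (h : M3) = l • (rep (γ * h').1 : M3) := by
  rw [← Units.val_mul]
  apply pgl_eq
  rw [rep_mk, QuotientGroup.mk_mul, rep_mk, Subgroup.coe_mul, hh]

theorem NN_semi (Γ : Subgroup PGL3) [Fintype Γ] (d : ℕ) (h : GL (Fin 3) ℂ)
    (hh : (QuotientGroup.mk h : PGL3) ∈ Γ) :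
    ∃ χ : ℂ, χ ≠ 0 ∧ ∀ Q : MvPolynomial (Fin 3) ℂ, Q.IsHomogeneous d →
      substMat (h : M3) (NN Γ Q) = χ • NN Γ Q := by
  obtain ⟨h', hh'⟩ : ∃ h' : Γ, h'.1 = QuotientGroup.mk h := ⟨⟨_, hh⟩, rfl⟩
  choose l hl0 hl using NN_semi_aux Γ h h' hh'
  refine ⟨∏ γ, l γ ^ d, Finset.prod_ne_zero_iff.2 fun γ _ => pow_ne_zero d (hl0 γ), fun Q hQ => ?_⟩
  have h1 : ∀ γ : Γ, substMat (h : M3) (substMat (rep γ.1 : M3) Q) =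
      C (l γ ^ d) * substMat (rep (γ * h').1 : M3) Q := by
    intro γ
    rw [substMat_substMat, hl γ, substMat_smul _ _ _ _ hQ, smul_eq_C_mul]
  have h2 : ∏ γ : Γ, substMat (rep (γ * h').1 : M3) Q = NN Γ Q :=
    Equiv.prod_comp (Equiv.mulRight h') (fun γ : Γ => substMat (rep γ.1 : M3) Q)
  calc substMat (h : M3) (NN Γ Q) = ∏ γ : Γ, substMat (h : M3) (substMat (rep γ.1 : M3) Q) := by
        rw [NN, map_prod]
    _ = ∏ γ : Γ, (C (l γ ^ d) * substMat (rep (γ * h').1 : M3) Q) :=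
        Finset.prod_congr rfl fun γ _ => h1 γ
    _ = (∏ γ : Γ, C (l γ ^ d)) * NN Γ Q := by rw [Finset.prod_mul_distrib, h2]
    _ = _ := by rw [smul_eq_C_mul, map_prod]

theorem det_rep (g : GL (Fin 3) ℂ) : (g : M3).det ≠ 0 := by
  have := (Matrix.isUnit_iff_isUnit_det (g : M3)).1 g.isUnit
  exact this.ne_zero

theorem NN_stab (Γ : Subgroup PGL3) [Fintype Γ] (g : GL (Fin 3) ℂ) (c : ℂ) (hc : c ≠ 0)
    (h : substMat (g : M3) (NN Γ F0) = c • NN Γ F0) : (QuotientGroup.mk g : PGL3) ∈ Γ := by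
  set o : GL (Fin 3) ℂ := rep (1 : Γ).1 with ho
  have hirr := substMat_irr ((o * g : GL (Fin 3) ℂ) : M3) (det_rep _)
  have hpr := hirr.prime
  have hdvd : substMat ((o * g : GL (Fin 3) ℂ) : M3) F0 ∣ C c * NN Γ F0 := by
    rw [← smul_eq_C_mul, ← h, NN, map_prod]
    have := Finset.dvd_prod_of_mem (fun γ : Γ => substMat (g : M3) (substMat (rep γ.1 : M3) F0))
      (Finset.mem_univ 1)
    rw [Units.val_mul, ← substMat_substMat]
    exact this
  rcases hpr.dvd_or_dvd hdvd with h1 | h1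
  · exact absurd (isUnit_of_dvd_unit h1 ((isUnit_iff_ne_zero.2 hc).map C)) hirr.not_isUnit
  obtain ⟨γ, -, h2⟩ := hpr.exists_mem_finset_dvd h1
  obtain ⟨u, hu⟩ := hirr.associated_of_dvd (substMat_irr _ (det_rep _)) h2
  obtain ⟨r, hr, hur⟩ := isUnit_iff_eq_C_of_isReduced.1 u.isUnit
  rw [hur] at hu
  have h3 : ∀ x, eval ((rep γ.1 * (o * g)⁻¹ : GL (Fin 3) ℂ).1.mulVec x) F0 = r * eval x F0 := by
    intro x
    have h5 := congrArg (eval (((o * g)⁻¹ : GL (Fin 3) ℂ).1.mulVec x)) hu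
    rw [map_mul, eval_C, substMat_eval, substMat_eval, Matrix.mulVec_mulVec, Matrix.mulVec_mulVec,
      ← Units.val_mul, ← Units.val_mul, mul_inv_cancel, Units.val_one, Matrix.one_mulVec] at h5
    rw [← h5, mul_comm]
  obtain ⟨s, hs⟩ := F0_stab _ (det_rep _) r hr.ne_zero h3
  have h4 : (QuotientGroup.mk (o * g) : PGL3) = QuotientGroup.mk (rep γ.1) := by
    apply pgl_eq' s
    have : rep γ.1 = (rep γ.1 * (o * g)⁻¹) * (o * g) := by group
    rw [this, Units.val_mul, hs, smul_mul_assoc, one_mul]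
  rw [QuotientGroup.mk_mul, rep_mk, rep_mk] at h4
  have : (QuotientGroup.mk g : PGL3) = γ.1 := by simpa using h4
  rw [this]; exact γ.2

theorem NN_stab_finite (Γ : Subgroup PGL3) [Fintype Γ] : {g | Stb (NN Γ F0) g}.Finite := by
  have hfin : (⋃ γ : Γ, (fun l : ℂ => l • (rep γ.1 : M3)) ''
      ((Polynomial.nthRoots 3 ((rep γ.1 : M3).det)⁻¹).toFinset : Set ℂ)).Finite :=
    Set.finite_iUnion fun γ => (Finset.finite_toSet _).image _
  refine hfin.subset ?_
  rintro g ⟨h1, c, hc, h2⟩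
  let G : GL (Fin 3) ℂ := Matrix.GeneralLinearGroup.mkOfDetNeZero g (by rw [h1]; exact one_ne_zero)
  have hG : (QuotientGroup.mk G : PGL3) ∈ Γ := NN_stab Γ G c hc (MvPolynomial.funext fun x => by
    rw [substMat_eval, smul_eval]; exact h2 x)
  obtain ⟨l, hl, hl2⟩ := pgl_eq (rep_mk (QuotientGroup.mk G))
  refine Set.mem_iUnion.2 ⟨⟨_, hG⟩, l, ?_, hl2.symm⟩
  have h3 : g = l • (rep (QuotientGroup.mk G) : M3) := hl2
  have h4 := congrArg Matrix.det h3
  rw [h1, Matrix.det_smul, Fintype.card_fin] at h4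
  simp only [Finset.mem_coe, Multiset.mem_toFinset]
  rw [Polynomial.mem_nthRoots (by norm_num)]
  exact eq_inv_of_mul_eq_one_left h4.symm

theorem linePoly_coeff_zero (P : MvPolynomial (Fin 3) ℂ) (p w : Fin 3 → ℂ) :
    (linePoly P p w).coeff 0 = eval p P := by
  rw [Polynomial.coeff_zero_eq_eval_zero, linePoly_eval, zero_smul, add_zero]

theorem linePoly_coeff_one (P : MvPolynomial (Fin 3) ℂ) (p w : Fin 3 → ℂ) :
    (linePoly P p w).coeff 1 = ∑ k, w k * eval p (pderiv k P) := by
  induction P using MvPolynomial.induction_on with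
  | C a => simp [linePoly, Polynomial.coeff_C]
  | add p q hp hq =>
    have : ∀ p' w', linePoly (p + q) p' w' = linePoly p p' w' + linePoly q p' w' := by
      intros; simp [linePoly]
    simp only [this, Polynomial.coeff_add, map_add, hp, hq, mul_add, Finset.sum_add_distrib]
  | mul_X q n hp =>
    have : linePoly (q * X n) p w = linePoly q p w * Polynomial.C (p n) +
        linePoly q p w * Polynomial.C (w n) * Polynomial.X := by
      simp only [linePoly, map_mul, aeval_X]; ring
    rw [this, Polynomial.coeff_add, Polynomial.coeff_mul_C, Polynomial.coeff_mul_X,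
      Polynomial.coeff_mul_C, hp, linePoly_coeff_zero]
    simp only [pderiv_mul, pderiv_X, map_add, map_mul, eval_X, mul_add, Finset.sum_add_distrib,
      Finset.sum_mul]
    congr 1
    · refine Finset.sum_congr rfl fun k _ => by ring
    · rw [Finset.sum_eq_single n]
      · simp [mul_comm]
      · intro b _ hb; simp [Pi.single_apply, hb, Ne.symm hb]
      · simp

theorem NN_mult (Γ : Subgroup PGL3) [Fintype Γ] : Mult (NN Γ F0) (Fintype.card Γ) := by
  intro p hp
  let L : Γ → MvPolynomial (Fin 3) ℂ := fun γ =>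
    ∑ k, (∑ j, C ((rep γ.1 : M3) k j) * X j) * C (eval ((rep γ.1 : M3).mulVec p) (pderiv k F0))
  have hLe : ∀ γ w, eval w (L γ) = (linePoly (substMat (rep γ.1 : M3) F0) p w).coeff 1 := by
    intro γ w
    have : linePoly (substMat (rep γ.1 : M3) F0) p w =
        linePoly F0 ((rep γ.1 : M3).mulVec p) ((rep γ.1 : M3).mulVec w) := by
      refine Polynomial.funext fun t => ?_
      rw [linePoly_eval, linePoly_eval, substMat_eval, Matrix.mulVec_add, Matrix.mulVec_smul]
    rw [this, linePoly_coeff_one]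
    simp [L, Matrix.mulVec, dotProduct]
  have hL : ∀ γ, L γ ≠ 0 := by
    intro γ h0
    refine hp ?_
    have hu : IsUnit (rep γ.1 : M3).det := isUnit_iff_ne_zero.2 (det_rep _)
    have : (rep γ.1 : M3).mulVec p = 0 := by
      apply F0_smooth
      intro i
      have h1 : eval ((rep γ.1 : M3)⁻¹.mulVec (Pi.single i 1)) (L γ) =
          eval ((rep γ.1 : M3).mulVec p) (pderiv i F0) := by
        have : ∀ w, eval w (L γ) = ∑ k, (rep γ.1 : M3).mulVec w k *
            eval ((rep γ.1 : M3).mulVec p) (pderiv k F0) := by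
          intro w; simp [L, Matrix.mulVec, dotProduct]
        rw [this, Matrix.mulVec_mulVec, Matrix.mul_nonsing_inv _ hu, Matrix.one_mulVec]
        simp [Pi.single_apply]
      rw [← h1, h0, map_zero]
    have h2 := congrArg ((rep γ.1 : M3)⁻¹.mulVec) this
    rwa [Matrix.mulVec_mulVec, Matrix.nonsing_inv_mul _ hu, Matrix.one_mulVec,
      Matrix.mulVec_zero] at h2
  have hprod : ∏ γ, L γ ≠ 0 := Finset.prod_ne_zero_iff.2 fun γ _ => hL γ
  obtain ⟨w, hw⟩ : ∃ w, eval w (∏ γ, L γ) ≠ 0 := by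
    by_contra h
    push Not at h
    exact hprod (MvPolynomial.funext fun x => by rw [h x, map_zero])
  rw [map_prod, Finset.prod_ne_zero_iff] at hw
  have hc : ∀ γ : Γ, (linePoly (substMat (rep γ.1 : M3) F0) p w).coeff 1 ≠ 0 := fun γ => by
    rw [← hLe]; exact hw γ (Finset.mem_univ _)
  have hkey : ∀ S : Finset Γ, (∏ γ ∈ S, linePoly (substMat (rep γ.1 : M3) F0) p w) ≠ 0 ∧
      (∏ γ ∈ S, linePoly (substMat (rep γ.1 : M3) F0) p w).natTrailingDegree ≤ S.card := by
    classical
    intro S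
    induction S using Finset.induction_on with
    | empty => simp
    | insert a S ha ih =>
      have h0 : linePoly (substMat (rep a.1 : M3) F0) p w ≠ 0 := fun h => hc a (by rw [h]; simp)
      have h1 := Polynomial.natTrailingDegree_le_of_ne_zero (hc a)
      rw [Finset.prod_insert ha, Finset.card_insert_of_notMem ha]
      refine ⟨mul_ne_zero h0 ih.1, ?_⟩
      rw [Polynomial.natTrailingDegree_mul h0 ih.1]
      omega
  obtain ⟨k1, k2⟩ := hkey Finset.univ
  have hlp : linePoly (NN Γ F0) p w = ∏ γ : Γ, linePoly (substMat (rep γ.1 : M3) F0) p w := by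
    simp only [linePoly, NN, map_prod]
  refine ⟨w, _, k2, ?_⟩
  rw [hlp]
  exact Polynomial.trailingCoeff_nonzero_iff_nonzero.2 k1

def ell (k : ℕ) : MvPolynomial (Fin 3) ℂ := (X 0 + C (k : ℂ) * X 1 + C ((k : ℂ) ^ 2) * X 2) ^ 4

theorem ell_hom (k : ℕ) : (ell k).IsHomogeneous 4 := by
  have h : ∀ i : Fin 3, (X i : MvPolynomial (Fin 3) ℂ).IsHomogeneous 1 := isHomogeneous_X ℂ
  have hC : ∀ (a : ℂ) i, (C a * X i : MvPolynomial (Fin 3) ℂ).IsHomogeneous 1 :=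
    fun a i => by simpa using (isHomogeneous_C (Fin 3) a).mul (h i)
  have h4 : ∀ {p : MvPolynomial (Fin 3) ℂ}, p.IsHomogeneous 1 → (p ^ 4).IsHomogeneous 4 :=
    fun hp => by simpa using hp.pow 4
  exact h4 (((h 0).add (hC _ 1)).add (hC _ 2))

theorem ell_base (Γ : Subgroup PGL3) [Fintype Γ] (p : Fin 3 → ℂ)
    (h : ∀ k : Fin (2 * Fintype.card Γ + 1), eval p (NN Γ (ell k)) = 0) : p = 0 := by
  classical
  have h1 : ∀ k : Fin (2 * Fintype.card Γ + 1), ∃ γ : Γ,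
      eval ((rep γ.1 : M3).mulVec p) (ell k) = 0 := by
    intro k
    have := h k
    rw [NN, map_prod, Finset.prod_eq_zero_iff] at this
    obtain ⟨γ, -, h2⟩ := this
    exact ⟨γ, by rwa [substMat_eval] at h2⟩
  choose f hf using h1
  obtain ⟨γ, hγ⟩ := Fintype.exists_lt_card_fiber_of_mul_lt_card (f := f) (n := 2)
    (by rw [Fintype.card_fin]; omega)
  obtain ⟨a, ha, b, hb, c, hc, hab, hac, hbc⟩ := Finset.two_lt_card.1 hγ
  simp only [Finset.mem_filter, Finset.mem_univ, true_and] at ha hb hc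
  have ea := hf a
  have eb := hf b
  have ec := hf c
  rw [ha] at ea
  rw [hb] at eb
  rw [hc] at ec
  have hu : IsUnit (rep γ.1 : M3).det := isUnit_iff_ne_zero.2 (det_rep _)
  set v := (rep γ.1 : M3).mulVec p with hv
  simp only [ell, map_pow, map_add, map_mul, eval_X, eval_C, pow_eq_zero_iff, ne_eq,
    OfNat.ofNat_ne_zero, not_false_eq_true] at ea eb ec
  have n1 : ((a : ℕ) : ℂ) - ((b : ℕ) : ℂ) ≠ 0 := by
    rw [sub_ne_zero]; exact_mod_cast fun h => hab (Fin.ext h)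
  have n2 : ((a : ℕ) : ℂ) - ((c : ℕ) : ℂ) ≠ 0 := by
    rw [sub_ne_zero]; exact_mod_cast fun h => hac (Fin.ext h)
  have n3 : ((b : ℕ) : ℂ) - ((c : ℕ) : ℂ) ≠ 0 := by
    rw [sub_ne_zero]; exact_mod_cast fun h => hbc (Fin.ext h)
  generalize ((a : ℕ) : ℂ) = a' at *
  generalize ((b : ℕ) : ℂ) = b' at *
  generalize ((c : ℕ) : ℂ) = c' at *
  have e1 : v 1 + (a' + b') * v 2 = 0 := by
    apply mul_left_cancel₀ n1; linear_combination ea - eb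
  have e2 : v 1 + (a' + c') * v 2 = 0 := by
    apply mul_left_cancel₀ n2; linear_combination ea - ec
  have v2 : v 2 = 0 := by
    apply mul_left_cancel₀ n3; linear_combination e1 - e2
  have v1 : v 1 = 0 := by rw [v2] at e1; simpa using e1
  have v0 : v 0 = 0 := by rw [v2, v1] at ea; simpa using ea
  have hv0 : v = 0 := by
    funext i; fin_cases i <;> simp [v0, v1, v2]
  have h2 := congrArg ((rep γ.1 : M3)⁻¹.mulVec) hv0
  rwa [hv, Matrix.mulVec_mulVec, Matrix.nonsing_inv_mul _ hu, Matrix.one_mulVec,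
      Matrix.mulVec_zero] at h2

theorem exists_small {ι : Type} (h : MvPolynomial ι ℂ) (e τ : ι → ℂ) (h1 : eval (e + τ) h ≠ 0)
    (η : ℝ) (hη : 0 < η) : ∃ s : ℂ, ‖s‖ < η ∧ eval (e + s • τ) h ≠ 0 := by
  let f : Polynomial ℂ := aeval (fun i => Polynomial.C (e i) + Polynomial.X * Polynomial.C (τ i)) h
  have hf : ∀ s, f.eval s = eval (e + s • τ) h := by
    intro s
    simp only [f]
    clear h1
    induction h using MvPolynomial.induction_on with
    | C a => simp
    | add p q hp hq => simp only [map_add, Polynomial.eval_add, hp, hq]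
    | mul_X p n hp =>
      rw [map_mul, map_mul, Polynomial.eval_mul, hp]
      simp only [aeval_X, Polynomial.eval_add, Polynomial.eval_mul, Polynomial.eval_C,
        Polynomial.eval_X, eval_X, Pi.add_apply, Pi.smul_apply, smul_eq_mul]
  have hf0 : f ≠ 0 := by
    intro h0
    apply h1
    have := hf 1
    rw [one_smul, h0] at this
    rw [← this]; simp
  have hinf : (Metric.ball (0 : ℂ) η).Infinite := infinite_of_mem_nhds 0 (Metric.ball_mem_nhds 0 hη)
  obtain ⟨s, hs1, hs2⟩ := (hinf.sdiff (f.roots.toFinset.finite_toSet)).nonempty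
  refine ⟨s, by simpa using hs1, fun h0 => hs2 ?_⟩
  rw [← hf] at h0
  simpa [hf0] using h0

/-- **Statement 17.** Any finite subgroup `Γ ⊆ PGL₃(ℂ)` of order `m` is the full stabilizer
of some smooth plane curve of degree `4m`: there is a homogeneous polynomial `Φ` of degree
`4m` defining a smooth curve such that `g ∈ PGL₃(ℂ)` stabilizes the curve `Φ = 0` if and
only if `g ∈ Γ`. -/
theorem finite_subgroup_is_stabilizer (m : ℕ) (Γ : Subgroup PGL3) [Finite Γ]
    (hm : Nat.card Γ = m) :
    ∃ Φ : MvPolynomial (Fin 3) ℂ, Φ.IsHomogeneous (4 * m) ∧ SmoothCurve Φ ∧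
      ∀ g : PGL3, ProjStab Φ g ↔ g ∈ Γ := by
  classical
  have := Fintype.ofFinite Γ
  have hm' : Fintype.card Γ = m := by rw [← hm, Nat.card_eq_fintype_card]
  have hm1 : 1 ≤ m := by rw [← hm']; exact Fintype.card_pos
  let Q : Option (Fin (2 * Fintype.card Γ + 1)) → MvPolynomial (Fin 3) ℂ :=
    fun i => i.elim F0 (fun k => ell k)
  have hQ : ∀ i, (Q i).IsHomogeneous 4 := by
    rintro (_ | k)
    · exact F0_hom
    · exact ell_hom k
  let F : Option (Fin (2 * Fintype.card Γ + 1)) → MvPolynomial (Fin 3) ℂ := fun i => NN Γ (Q i)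
  have hF : ∀ i, (F i).IsHomogeneous (4 * m) := fun i => by
    have := NN_hom Γ (Q i) (hQ i)
    rwa [hm'] at this
  obtain ⟨h, hh0, hh⟩ := bertini (4 * m) (by omega) F hF
    (fun q hq => ell_base Γ q fun k => hq (some k))
  obtain ⟨t, ht⟩ : ∃ t, eval t h ≠ 0 := by
    by_contra hcon
    push Not at hcon
    exact hh0 (MvPolynomial.funext fun x => by rw [hcon x, map_zero])
  let e : Option (Fin (2 * Fintype.card Γ + 1)) → ℂ := Pi.single none 1
  let τ := t - e
  let A := NN Γ F0
  let B := ∑ i, τ i • F i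
  have hsum : ∀ v : Option (Fin (2 * Fintype.card Γ + 1)) → ℂ,
      (∑ i, v i • F i).IsHomogeneous (4 * m) := fun v =>
    IsHomogeneous.sum _ _ _ fun i _ => by
      rw [smul_eq_C_mul]; simpa using (isHomogeneous_C _ (v i)).mul (hF i)
  have hAB : ∀ s : ℂ, A + s • B = ∑ i, (e + s • τ) i • F i := by
    intro s
    simp only [Pi.add_apply, Pi.smul_apply, add_smul, Finset.sum_add_distrib, smul_eq_mul,
      mul_smul, ← Finset.smul_sum]
    congr 1
    rw [Finset.sum_eq_single none]
    · simp [e, A, F, Q]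
    · intro b _ hb; simp [e, Pi.single_apply, hb]
    · simp
  have hsemi : ∀ (s : ℂ) (g : GL (Fin 3) ℂ), (QuotientGroup.mk g : PGL3) ∈ Γ →
      ∃ c : ℂ, c ≠ 0 ∧ substMat (g : M3) (A + s • B) = c • (A + s • B) := by
    intro s g hg
    obtain ⟨χ, hχ, H⟩ := NN_semi Γ 4 g hg
    refine ⟨χ, hχ, ?_⟩
    rw [hAB, map_sum, Finset.smul_sum]
    refine Finset.sum_congr rfl fun i _ => ?_
    rw [map_smul, H _ (hQ i), smul_comm]
  have hAh : A.IsHomogeneous (4 * m) := hF none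
  have hAm : Mult A m := by rw [← hm']; exact NN_mult Γ
  obtain ⟨η, hη, hst⟩ := stab_perturb A B m hm1 hAm hAh (hsum τ) (NN_stab_finite Γ) (by
    rintro s g ⟨h1, c, hc, h2⟩
    let G : GL (Fin 3) ℂ := Matrix.GeneralLinearGroup.mkOfDetNeZero g (by rw [h1]; exact one_ne_zero)
    have hG : (QuotientGroup.mk G : PGL3) ∈ Γ := NN_stab Γ G c hc (MvPolynomial.funext fun x => by
      rw [substMat_eval, smul_eval]; exact h2 x)
    obtain ⟨χ, hχ, H⟩ := hsemi s G hG
    refine ⟨h1, χ, hχ, fun x => ?_⟩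
    rw [← smul_eval, ← H, substMat_eval]
    rfl)
  obtain ⟨s, hs, hs2⟩ := exists_small h e τ (by simpa [τ] using ht) η hη
  have hΦh : (A + s • B).IsHomogeneous (4 * m) := by rw [hAB]; exact hsum _
  refine ⟨A + s • B, hΦh, ?_, fun g => ⟨?_, fun hg => ?_⟩⟩
  · intro q hq
    rw [hAB] at hq
    exact hh _ hs2 q hq
  · rintro ⟨G, rfl, c, hc, hG⟩
    obtain ⟨l, hl⟩ := IsAlgClosed.exists_pow_nat_eq ((G : M3).det)⁻¹ (by norm_num : 0 < 3)
    have hl0 : l ≠ 0 := by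
      rintro rfl
      rw [zero_pow (by norm_num)] at hl
      exact inv_ne_zero (det_rep G) hl.symm
    have hS : Stb (A + s • B) (l • (G : M3)) := by
      refine ⟨?_, l ^ (4 * m) * c, mul_ne_zero (pow_ne_zero _ hl0) hc, fun x => ?_⟩
      · rw [Matrix.det_smul, Fintype.card_fin, hl, inv_mul_cancel₀ (det_rep G)]
      · rw [← substMat_eval, substMat_smul _ _ _ _ hΦh, hG, smul_eval, smul_eval, mul_assoc]
    obtain ⟨-, c', hc', h2⟩ := hst s hs _ hS
    refine NN_stab Γ G ((l ^ (4 * m))⁻¹ * c')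
      (mul_ne_zero (inv_ne_zero (pow_ne_zero _ hl0)) hc') (MvPolynomial.funext fun x => ?_)
    have h3 := h2 x
    rw [← substMat_eval, substMat_smul _ _ _ _ hAh, smul_eval] at h3
    rw [smul_eval, mul_assoc]
    exact (eq_inv_mul_iff_mul_eq₀ (pow_ne_zero _ hl0)).2 h3
  · obtain ⟨c, hc, H⟩ := hsemi s (rep g) (by rw [rep_mk]; exact hg)
    exact ⟨rep g, rep_mk g, c, hc, H⟩
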